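/- Let condition B hold and let v_ε, ε ∈ (0, ε₀], be positive numbers with v_ε → ∞ as ε → 0. Suppose that for some family of initial distributions q̄_ε the random variables κ_ε(1) = Σ_{n=1}^{[v_ε]} κ_{ε,n} converge in distribution as ε → 0 to a nonnegative random variable θ₀ whose distribution is not concentrated at zero. Then condition D₁ holds: the limit A(s) = lim_{ε→0} v_ε(1 − φ_ε(s)) exists for every s > 0, with A(s) > 0 for s > 0 and A(s) → 0 as s → 0+, and moreover E e^{−sθ₀} = e^{−A(s)} for s ≥ 0. -/

import Mathlib

open MeasureTheory Filter Set
open scoped Topology ENNReal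

noncomputable section

/-- Condition B: there exists a ring chain of states `c 0, c 1, …, c N = c 0`
containing all states of the phase space, with
`liminf_{ε→0+} p ε (c (k-1)) (c k) > 0` for `k = 1, …, N`. -/
def CondB {m : ℕ} (p : ℝ → Fin m → Fin m → ℝ) : Prop :=
  ∃ N : ℕ, 0 < N ∧ ∃ c : ℕ → Fin m, c N = c 0 ∧
    (∀ i : Fin m, ∃ k ≤ N, c k = i) ∧
    ∀ k < N, 0 < Filter.liminf (fun ε => p ε (c k) (c (k + 1))) (𝓝[>] (0 : ℝ))

/-- `π` is a stationary distribution of the transition matrix `p`. -/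
def IsStationaryDist {m : ℕ} (p : Fin m → Fin m → ℝ) (π : Fin m → ℝ) : Prop :=
  (∀ i, 0 ≤ π i) ∧ (∑ i, π i = 1) ∧ ∀ j, π j = ∑ i, π i * p i j

/-!
For fixed `s`, weighting each transition by `e^{-s κ}` turns the embedded chain into a killed chain
with one-step matrix `Φ i j = E_i[e^{-s κ₁}; η₁ = j]`, and `E e^{-s κ_ε(1)}` into its probability of
surviving `[v_ε]` steps. The killing probability under the stationary distribution is
`δ = 1 - φ_ε(s)`.

Condition B makes the embedded chains irreducible uniformly in `ε`. Hence a uniform number of steps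
kills with probability at least `c δ`, whatever the initial state, and since the survival
probability has a positive limit, `δ → 0`. Moreover the survival probability of `n` steps depends on
the initial state only up to `O(δ)`, uniformly in `n`: it is `P`-subharmonic up to an error `O(δ)`,
because one more step changes it by `O(δ)`. Started from the stationary distribution it therefore
satisfies `w (n + 1) = (1 - δ) w n + O(δ²)`, so that it equals `(1 - δ)^n + O(δ)`. Thus
`(1 - δ)^{[v_ε]}` converges to the Laplace transform of `θ₀`, and taking logarithms `v_ε δ`
converges to `A(s) = -log E e^{-s θ₀}`.
-/

open Matrix

lemma abs_sub_pow_le_of_abs_succ_sub_mul_le {w : ℕ → ℝ} {r K : ℝ} (hr : 0 ≤ r) (hw : w 0 = 1)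
    (hK : 0 ≤ K) (h : ∀ n, |w (n + 1) - r * w n| ≤ (1 - r) * K) (n : ℕ) :
    |w n - r ^ n| ≤ K := by
  induction n with
  | zero => simpa [hw] using hK
  | succ n ih =>
    calc |w (n + 1) - r ^ (n + 1)| = |(w (n + 1) - r * w n) + r * (w n - r ^ n)| := by ring_nf
      _ ≤ |w (n + 1) - r * w n| + |r * (w n - r ^ n)| := abs_add_le _ _
      _ ≤ (1 - r) * K + r * K := by
          rw [abs_mul, abs_of_nonneg hr]
          exact add_le_add (h n) (mul_le_mul_of_nonneg_left ih hr)
      _ = K := by ring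

section KilledChain

variable {S : Type*} [Fintype S] {M : Matrix S S ℝ} {a u w π q : S → ℝ}

lemma mulVec_mono_of_nonneg (hM : ∀ i j, 0 ≤ M i j) (h : u ≤ w) : M *ᵥ u ≤ M *ᵥ w :=
  fun i => dotProduct_le_dotProduct_of_nonneg_left h (hM i)

lemma dotProduct_le_of_mem_stdSimplex (hπ : π ∈ stdSimplex ℝ S) {x : ℝ} (h : ∀ i, u i ≤ x) :
    π ⬝ᵥ u ≤ x :=
  calc π ⬝ᵥ u ≤ π ⬝ᵥ fun _ => x := dotProduct_le_dotProduct_of_nonneg_left h hπ.1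
    _ = x := by simp only [dotProduct, ← Finset.sum_mul, hπ.2, one_mul]

lemma abs_dotProduct_sub_sum_mul_le (ha : 0 ≤ a) {x t : ℝ} (h : ∀ i, |u i - x| ≤ t) :
    |a ⬝ᵥ u - (∑ i, a i) * x| ≤ (∑ i, a i) * t :=
  calc |a ⬝ᵥ u - (∑ i, a i) * x| = |∑ i, a i * (u i - x)| := by
        simp only [dotProduct, mul_sub, Finset.sum_sub_distrib, Finset.sum_mul]
    _ ≤ ∑ i, |a i * (u i - x)| := Finset.abs_sum_le_sum_abs _ _
    _ ≤ ∑ i, a i * t := Finset.sum_le_sum fun i _ => by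
        rw [abs_mul, abs_of_nonneg (ha i)]
        exact mul_le_mul_of_nonneg_left (h i) (ha i)
    _ = (∑ i, a i) * t := (Finset.sum_mul ..).symm

lemma abs_dotProduct_sub_le_of_mem_stdSimplex (hπ : π ∈ stdSimplex ℝ S) {x t : ℝ}
    (h : ∀ i, |u i - x| ≤ t) : |π ⬝ᵥ u - x| ≤ t := by
  simpa only [hπ.2, one_mul] using abs_dotProduct_sub_sum_mul_le hπ.1 h

variable [DecidableEq S] {P Φ : Matrix S S ℝ} {c : ℝ} {L : ℕ}

lemma mulVec_apply_le_sub_of_mem_rowStochastic (hM : M ∈ rowStochastic ℝ S) {x : ℝ}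
    (h : ∀ k, u k ≤ x) (i j : S) : (M *ᵥ u) i ≤ x - M i j * (x - u j) := by
  have hsum : ∑ k, M i k * (x - u k) = x - (M *ᵥ u) i := by
    simp only [mul_sub, Finset.sum_sub_distrib, ← Finset.sum_mul,
      sum_row_of_mem_rowStochastic hM, one_mul, mulVec, dotProduct]
  have hsingle : M i j * (x - u j) ≤ ∑ k, M i k * (x - u k) :=
    Finset.single_le_sum (f := fun k => M i k * (x - u k))
      (fun k _ => mul_nonneg (nonneg_of_mem_rowStochastic hM) (sub_nonneg.2 (h k)))
      (Finset.mem_univ j)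
  linarith

lemma mulVec_const_of_mem_rowStochastic (hM : M ∈ rowStochastic ℝ S) (t : ℝ) :
    (M *ᵥ fun _ => t) = fun _ => t := by
  ext i
  simp only [mulVec, dotProduct, ← Finset.sum_mul, sum_row_of_mem_rowStochastic hM, one_mul]

lemma le_pow_mulVec_add_mul (hP : P ∈ rowStochastic ℝ S) {t : ℝ}
    (hu : ∀ i, u i ≤ (P *ᵥ u) i + t) (l : ℕ) (i : S) : u i ≤ ((P ^ l) *ᵥ u) i + l * t := by
  induction l generalizing i with
  | zero => simp
  | succ l ih =>
    have hmono : (P *ᵥ u) i ≤ (P *ᵥ ((P ^ l) *ᵥ u + fun _ => l * t)) i :=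
      mulVec_mono_of_nonneg (fun _ _ => nonneg_of_mem_rowStochastic hP) ih i
    rw [mulVec_add, mulVec_const_of_mem_rowStochastic hP, mulVec_mulVec, ← pow_succ',
      Pi.add_apply] at hmono
    push_cast
    linarith [hu i]

lemma vecMul_pow_eq_self (h : π ᵥ* P = π) (l : ℕ) : π ᵥ* (P ^ l) = π := by
  induction l with
  | zero => simp
  | succ l ih => rw [pow_succ, ← vecMul_vecMul, ih, h]

/-- Quantitative irreducibility: every state is reached from every other one in at most `L` steps,
with probability at least `c`. Condition B gives this with `c` and `L` independent of `ε`. -/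
def IsUnifIrreducible (P : Matrix S S ℝ) (c : ℝ) (L : ℕ) : Prop :=
  ∀ i j, ∃ l ≤ L, c ≤ (P ^ l) i j

namespace IsUnifIrreducible

lemma div_card_le_stationary (hirr : IsUnifIrreducible P c L) (hP : P ∈ rowStochastic ℝ S)
    (hc : 0 ≤ c) (hπ : π ∈ stdSimplex ℝ S) (hπP : π ᵥ* P = π) (j : S) :
    c / Fintype.card S ≤ π j := by
  have hcard : (0 : ℝ) < Fintype.card S := by exact_mod_cast Fintype.card_pos_iff.2 ⟨j⟩
  obtain ⟨i, -, hi⟩ : ∃ i ∈ Finset.univ, 1 / (Fintype.card S : ℝ) ≤ π i :=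
    Finset.exists_le_of_sum_le ⟨j, Finset.mem_univ j⟩ (by simp [hπ.2, hcard.ne'])
  obtain ⟨l, -, hl⟩ := hirr i j
  calc c / Fintype.card S = 1 / Fintype.card S * c := by ring
    _ ≤ π i * (P ^ l) i j := mul_le_mul hi hl hc (hπ.1 i)
    _ ≤ (π ᵥ* (P ^ l)) j :=
        Finset.single_le_sum (f := fun k => π k * (P ^ l) k j)
          (fun k _ => mul_nonneg (hπ.1 k) (nonneg_of_mem_rowStochastic (pow_mem hP l)))
          (Finset.mem_univ i)
    _ = π j := by rw [vecMul_pow_eq_self hπP]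

lemma sub_le_of_le_mulVec_add (hirr : IsUnifIrreducible P c L) (hP : P ∈ rowStochastic ℝ S)
    (hc : 0 < c) {t : ℝ} (ht : 0 ≤ t) (hu : ∀ i, u i ≤ (P *ᵥ u) i + t) (i j : S) :
    u i - u j ≤ L * t / c := by
  have : Nonempty S := ⟨i⟩
  obtain ⟨i₀, hi₀⟩ := Finite.exists_max u
  obtain ⟨l, hlL, hl⟩ := hirr i₀ j
  have hmax : u i₀ ≤ u i₀ - (P ^ l) i₀ j * (u i₀ - u j) + l * t :=
    (le_pow_mulVec_add_mul hP hu l i₀).trans <| add_le_add_left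
      (mulVec_apply_le_sub_of_mem_rowStochastic (pow_mem hP l) hi₀ i₀ j) _
  have hprob : c * (u i₀ - u j) ≤ (P ^ l) i₀ j * (u i₀ - u j) :=
    mul_le_mul_of_nonneg_right hl (sub_nonneg.2 (hi₀ j))
  have hsteps : l * t ≤ L * t := mul_le_mul_of_nonneg_right (by exact_mod_cast hlL) ht
  calc u i - u j ≤ u i₀ - u j := sub_le_sub_right (hi₀ i) _
    _ ≤ L * t / c := by rw [le_div_iff₀' hc]; linarith

end IsUnifIrreducible

/-- `Φ` is the one-step matrix of the chain with transition matrix `P` in which a transition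
`i → j` is survived with probability `Φ i j / P i j`. For the reward process,
`Φ i j = E_i[e^{-s κ₁}; η₁ = j]`: the chain is killed along the reward `κ` at rate `s`. -/
structure IsKilledChain (Φ P : Matrix S S ℝ) : Prop where
  stochastic : P ∈ rowStochastic ℝ S
  nonneg : ∀ i j, 0 ≤ Φ i j
  le : ∀ i j, Φ i j ≤ P i j

/-- The probability, as a function of the initial state, that the chain with one-step matrix `Φ`
survives `n` steps. -/
def survival (Φ : Matrix S S ℝ) (n : ℕ) : S → ℝ := (Φ ^ n) *ᵥ 1

/-- The probability that the chain with one-step matrix `Φ` is killed in a single step started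
from `π`. For the reward process this is the quantity `1 - φ_ε(s)` of the paper. -/
def killProb (π : S → ℝ) (Φ : Matrix S S ℝ) : ℝ := 1 - π ⬝ᵥ survival Φ 1

@[simp] lemma survival_zero (Φ : Matrix S S ℝ) : survival Φ 0 = 1 := by simp [survival]

lemma survival_add (Φ : Matrix S S ℝ) (k n : ℕ) :
    survival Φ (k + n) = (Φ ^ k) *ᵥ survival Φ n := by
  rw [survival, survival, mulVec_mulVec, pow_add]

lemma survival_succ (Φ : Matrix S S ℝ) (n : ℕ) : survival Φ (n + 1) = Φ *ᵥ survival Φ n := by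
  rw [add_comm, survival_add, pow_one]

lemma killProb_eq_dotProduct (hπ : π ∈ stdSimplex ℝ S) (Φ : Matrix S S ℝ) :
    killProb π Φ = π ⬝ᵥ (1 - survival Φ 1) := by
  rw [killProb, dotProduct_sub, dotProduct_one, hπ.2]

lemma dotProduct_survival_zero (hπ : π ∈ stdSimplex ℝ S) (Φ : Matrix S S ℝ) :
    π ⬝ᵥ survival Φ 0 = 1 := by
  rw [survival_zero, dotProduct_one, hπ.2]

namespace IsKilledChain

lemma pow (h : IsKilledChain Φ P) (n : ℕ) : IsKilledChain (Φ ^ n) (P ^ n) := by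
  induction n with
  | zero =>
    refine ⟨by simpa only [pow_zero] using one_mem _, fun i j => ?_, fun i j => le_rfl⟩
    rw [pow_zero, one_apply]
    positivity
  | succ n ih =>
    refine ⟨pow_mem h.stochastic _, fun i j => ?_, fun i j => ?_⟩ <;>
      simp only [pow_succ, mul_apply]
    · exact Finset.sum_nonneg fun k _ => mul_nonneg (ih.nonneg i k) (h.nonneg k j)
    · exact Finset.sum_le_sum fun k _ => mul_le_mul (ih.le i k) (h.le k j) (h.nonneg k j)
        ((ih.nonneg i k).trans (ih.le i k))

variable (h : IsKilledChain Φ P)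
include h

lemma mulVec_le (hu : 0 ≤ u) : Φ *ᵥ u ≤ P *ᵥ u :=
  fun i => dotProduct_le_dotProduct_of_nonneg_right (h.le i) hu

lemma survival_nonneg (n : ℕ) : 0 ≤ survival Φ n :=
  fun i => dotProduct_nonneg_of_nonneg ((h.pow n).nonneg i) zero_le_one

lemma survival_le_one (n : ℕ) : survival Φ n ≤ 1 :=
  ((h.pow n).mulVec_le zero_le_one).trans_eq
    (one_vecMul_of_mem_rowStochastic (h.pow n).stochastic)

lemma antitone_survival : Antitone (survival Φ) := by
  refine antitone_nat_of_succ_le fun n => ?_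
  rw [survival_add]
  exact mulVec_mono_of_nonneg (h.pow n).nonneg (h.survival_le_one 1)

lemma killProb_nonneg (hπ : π ∈ stdSimplex ℝ S) : 0 ≤ killProb π Φ :=
  sub_nonneg.2 (dotProduct_le_of_mem_stdSimplex hπ (h.survival_le_one 1))

lemma killProb_le_one (hπ : π ∈ stdSimplex ℝ S) : killProb π Φ ≤ 1 :=
  sub_le_self _ (dotProduct_nonneg_of_nonneg hπ.1 (h.survival_nonneg 1))

lemma survival_mul_le_pow {N : ℕ} {r : ℝ} (hr : 0 ≤ r) (hN : ∀ i, survival Φ N i ≤ r)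
    (k : ℕ) (i : S) : survival Φ (k * N) i ≤ r ^ k := by
  induction k generalizing i with
  | zero => simp
  | succ k ih =>
    have hN' : survival Φ N ≤ r • 1 := fun j => by simpa using hN j
    calc survival Φ ((k + 1) * N) i = (Φ ^ (k * N) *ᵥ survival Φ N) i := by
          rw [add_one_mul, survival_add]
      _ ≤ (Φ ^ (k * N) *ᵥ r • 1) i := mulVec_mono_of_nonneg (h.pow _).nonneg hN' i
      _ = r * survival Φ (k * N) i := by rw [mulVec_smul]; rfl
      _ ≤ r * r ^ k := mul_le_mul_of_nonneg_left (ih i) hr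
      _ = r ^ (k + 1) := (pow_succ' r k).symm

/- A state `j` minimizing `survival Φ 1` kills with probability at least `killProb π Φ`, and it is
reached within `L` steps with probability at least `c`. -/
lemma survival_add_one_le (hirr : IsUnifIrreducible P c L) (hπ : π ∈ stdSimplex ℝ S) (i : S) :
    survival Φ (L + 1) i ≤ 1 - c * killProb π Φ := by
  have : Nonempty S := ⟨i⟩
  obtain ⟨j, hj⟩ := Finite.exists_min (survival Φ 1)
  have hkill : killProb π Φ ≤ 1 - survival Φ 1 j := by
    rw [killProb_eq_dotProduct hπ]
    exact dotProduct_le_of_mem_stdSimplex hπ fun k => sub_le_sub_left (hj k) 1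
  obtain ⟨l, hlL, hl⟩ := hirr i j
  calc survival Φ (L + 1) i ≤ survival Φ (l + 1) i := h.antitone_survival (by omega) i
    _ = (Φ ^ l *ᵥ survival Φ 1) i := by rw [survival_add]
    _ ≤ (P ^ l *ᵥ survival Φ 1) i := (h.pow l).mulVec_le (h.survival_nonneg 1) i
    _ ≤ 1 - (P ^ l) i j * (1 - survival Φ 1 j) :=
        mulVec_apply_le_sub_of_mem_rowStochastic (h.pow l).stochastic (h.survival_le_one 1) i j
    _ ≤ 1 - c * killProb π Φ := by
        gcongr
        · exact h.killProb_nonneg hπ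
        · exact nonneg_of_mem_rowStochastic (h.pow l).stochastic

lemma survival_le_exp (hirr : IsUnifIrreducible P c L) (hπ : π ∈ stdSimplex ℝ S) (n : ℕ) (i : S) :
    survival Φ n i ≤ Real.exp (-(c * killProb π Φ * (n / (L + 1) : ℕ))) :=
  calc survival Φ n i ≤ survival Φ (n / (L + 1) * (L + 1)) i :=
        h.antitone_survival (Nat.div_mul_le_self _ _) i
    _ ≤ Real.exp (-(c * killProb π Φ)) ^ (n / (L + 1)) :=
        h.survival_mul_le_pow (Real.exp_nonneg _) (fun j =>
          (h.survival_add_one_le hirr hπ j).trans (Real.one_sub_le_exp_neg _)) _ i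
    _ = Real.exp (-(c * killProb π Φ * (n / (L + 1) : ℕ))) := by
        rw [← Real.exp_nat_mul]
        ring_nf

lemma one_sub_survival_one_le (hirr : IsUnifIrreducible P c L) (hc : 0 < c)
    (hπ : π ∈ stdSimplex ℝ S) (hπP : π ᵥ* P = π) (i : S) :
    1 - survival Φ 1 i ≤ Fintype.card S * killProb π Φ / c := by
  have hcard : (0 : ℝ) < Fintype.card S := by exact_mod_cast Fintype.card_pos_iff.2 ⟨i⟩
  have hkilled : 0 ≤ 1 - survival Φ 1 := sub_nonneg.2 (h.survival_le_one 1)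
  have hle : c / Fintype.card S * (1 - survival Φ 1 i) ≤ killProb π Φ :=
    calc c / Fintype.card S * (1 - survival Φ 1 i) ≤ π i * (1 - survival Φ 1 i) :=
          mul_le_mul_of_nonneg_right
            (hirr.div_card_le_stationary h.stochastic hc.le hπ hπP i) (hkilled i)
      _ ≤ π ⬝ᵥ (1 - survival Φ 1) :=
          Finset.single_le_sum (f := fun k => π k * (1 - survival Φ 1 k))
            (fun k _ => mul_nonneg (hπ.1 k) (hkilled k)) (Finset.mem_univ i)
      _ = killProb π Φ := (killProb_eq_dotProduct hπ Φ).symm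
  rw [div_mul_eq_mul_div, div_le_iff₀' hcard] at hle
  rwa [le_div_iff₀' hc]

lemma survival_sub_survival_succ_le {t : ℝ} (ht : ∀ i, 1 - survival Φ 1 i ≤ t) (n : ℕ) (i : S) :
    survival Φ n i - survival Φ (n + 1) i ≤ t :=
  calc survival Φ n i - survival Φ (n + 1) i = (Φ ^ n *ᵥ (1 - survival Φ 1)) i := by
        rw [survival_add, mulVec_sub]; rfl
    _ ≤ (P ^ n *ᵥ (1 - survival Φ 1)) i :=
        (h.pow n).mulVec_le (sub_nonneg.2 (h.survival_le_one 1)) i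
    _ ≤ (P ^ n *ᵥ fun _ => t) i :=
        mulVec_mono_of_nonneg (fun _ _ => nonneg_of_mem_rowStochastic (h.pow n).stochastic) ht i
    _ = t := by rw [mulVec_const_of_mem_rowStochastic (h.pow n).stochastic]

lemma abs_survival_sub_survival_le (hirr : IsUnifIrreducible P c L) (hc : 0 < c)
    (hπ : π ∈ stdSimplex ℝ S) (hπP : π ᵥ* P = π) (n : ℕ) (i j : S) :
    |survival Φ n i - survival Φ n j| ≤ L * Fintype.card S / c ^ 2 * killProb π Φ := by
  set t := Fintype.card S * killProb π Φ / c with ht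
  have ht₀ : 0 ≤ t := div_nonneg (mul_nonneg (Nat.cast_nonneg _) (h.killProb_nonneg hπ)) hc.le
  have hstep (k : S) : survival Φ n k ≤ (P *ᵥ survival Φ n) k + t := by
    have hdecr := h.survival_sub_survival_succ_le (h.one_sub_survival_one_le hirr hc hπ hπP) n k
    have hkill := h.mulVec_le (h.survival_nonneg n) k
    rw [← survival_succ] at hkill
    linarith
  have hosc (i j : S) : survival Φ n i - survival Φ n j ≤ L * t / c :=
    hirr.sub_le_of_le_mulVec_add h.stochastic hc ht₀ hstep i j
  rw [show L * Fintype.card S / c ^ 2 * killProb π Φ = L * t / c by rw [ht]; ring, abs_sub_le_iff]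
  exact ⟨hosc i j, hosc j i⟩

/- The killed mass `π ᵥ* (P - Φ)` is nonnegative of total mass `killProb π Φ`, so it averages
`survival Φ n` to within the oscillation of that function. -/
lemma abs_dotProduct_survival_succ_sub_le (hπ : π ∈ stdSimplex ℝ S) (hπP : π ᵥ* P = π) {n : ℕ}
    {K : ℝ} (hosc : ∀ i j, |survival Φ n i - survival Φ n j| ≤ K) :
    |π ⬝ᵥ survival Φ (n + 1) - (1 - killProb π Φ) * (π ⬝ᵥ survival Φ n)| ≤ killProb π Φ * K := by
  set x := π ⬝ᵥ survival Φ n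
  have hmass : ∑ i, (π - π ᵥ* Φ) i = killProb π Φ := by
    rw [← dotProduct_one, sub_dotProduct, ← dotProduct_mulVec, dotProduct_one, hπ.2, killProb,
      survival, pow_one]
  have hnonneg : 0 ≤ π - π ᵥ* Φ := by
    nth_rw 1 [← hπP]
    exact sub_nonneg.2 fun j => dotProduct_le_dotProduct_of_nonneg_left (fun i => h.le i j) hπ.1
  have hnear (i : S) : |survival Φ n i - x| ≤ K := by
    rw [abs_sub_comm]
    exact abs_dotProduct_sub_le_of_mem_stdSimplex hπ fun j => hosc j i
  have hsplit : π ⬝ᵥ survival Φ (n + 1) - (1 - killProb π Φ) * x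
      = -((π - π ᵥ* Φ) ⬝ᵥ survival Φ n - killProb π Φ * x) := by
    rw [survival_succ, dotProduct_mulVec, sub_dotProduct]
    ring
  rw [hsplit, abs_neg, ← hmass]
  exact abs_dotProduct_sub_sum_mul_le hnonneg hnear

theorem abs_dotProduct_survival_sub_pow_le (hirr : IsUnifIrreducible P c L) (hc : 0 < c)
    (hπ : π ∈ stdSimplex ℝ S) (hπP : π ᵥ* P = π) (hq : q ∈ stdSimplex ℝ S) (n : ℕ) :
    |q ⬝ᵥ survival Φ n - (1 - killProb π Φ) ^ n|
      ≤ 2 * (L * Fintype.card S / c ^ 2) * killProb π Φ := by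
  set K := L * Fintype.card S / c ^ 2 * killProb π Φ
  have hosc := h.abs_survival_sub_survival_le hirr hc hπ hπP
  have hstationary : |π ⬝ᵥ survival Φ n - (1 - killProb π Φ) ^ n| ≤ K :=
    abs_sub_pow_le_of_abs_succ_sub_mul_le (w := fun n => π ⬝ᵥ survival Φ n)
      (sub_nonneg.2 (h.killProb_le_one hπ)) (dotProduct_survival_zero hπ Φ)
      (mul_nonneg (by positivity) (h.killProb_nonneg hπ))
      (fun k => by simpa using h.abs_dotProduct_survival_succ_sub_le hπ hπP (hosc k)) n
  have hinitial : |q ⬝ᵥ survival Φ n - π ⬝ᵥ survival Φ n| ≤ K :=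
    abs_dotProduct_sub_le_of_mem_stdSimplex hq fun i => by
      rw [abs_sub_comm]
      exact abs_dotProduct_sub_le_of_mem_stdSimplex hπ fun j => hosc n j i
  linarith [abs_sub_le (q ⬝ᵥ survival Φ n) (π ⬝ᵥ survival Φ n) ((1 - killProb π Φ) ^ n)]

end IsKilledChain
end KilledChain

section RingChain

variable {S : Type*} [Fintype S] [DecidableEq S] {M : Matrix S S ℝ} {b : ℝ} {s : ℕ → S}

lemma pow_le_pow_apply_of_forall_le (hM : ∀ i j, 0 ≤ M i j) (hb : 0 ≤ b) {a l : ℕ}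
    (hs : ∀ k, a ≤ k → k < a + l → b ≤ M (s k) (s (k + 1))) :
    b ^ l ≤ (M ^ l) (s a) (s (a + l)) := by
  induction l with
  | zero => simp
  | succ l ih =>
    have hprefix : b ^ l ≤ (M ^ l) (s a) (s (a + l)) :=
      ih fun k hak hk => hs k hak (hk.trans (by omega))
    have hlast : b ≤ M (s (a + l)) (s (a + l + 1)) := hs (a + l) (by omega) (by omega)
    rw [pow_succ, pow_succ, mul_apply]
    calc b ^ l * b ≤ (M ^ l) (s a) (s (a + l)) * M (s (a + l)) (s (a + l + 1)) :=
          mul_le_mul hprefix hlast hb (pow_apply_nonneg hM ..)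
      _ ≤ _ := Finset.single_le_sum (f := fun k => (M ^ l) (s a) k * M k (s (a + l + 1)))
          (fun k _ => mul_nonneg (pow_apply_nonneg hM ..) (hM ..)) (Finset.mem_univ _)

/- From `s a` one follows the ring up to its closing state `s N = s 0` and then on to `s d`. -/
lemma isUnifIrreducible_of_ring (hM : ∀ i j, 0 ≤ M i j) (hb₀ : 0 ≤ b) (hb₁ : b ≤ 1) {N : ℕ}
    (hring : s N = s 0) (hcover : ∀ i, ∃ k ≤ N, s k = i)
    (hs : ∀ k < N, b ≤ M (s k) (s (k + 1))) : IsUnifIrreducible M (b ^ (2 * N)) (2 * N) := by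
  intro i j
  obtain ⟨a, ha, rfl⟩ := hcover i
  obtain ⟨d, hd, rfl⟩ := hcover j
  refine ⟨N - a + d, by omega, ?_⟩
  have hup : b ^ (N - a) ≤ (M ^ (N - a)) (s a) (s 0) := by
    have := pow_le_pow_apply_of_forall_le (a := a) (l := N - a) hM hb₀
      fun k _ hk => hs k (by omega)
    rwa [Nat.add_sub_cancel' ha, hring] at this
  have hdown : b ^ d ≤ (M ^ d) (s 0) (s d) := by
    have := pow_le_pow_apply_of_forall_le (a := 0) (l := d) hM hb₀ fun k _ hk => hs k (by omega)
    rwa [zero_add] at this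
  calc b ^ (2 * N) ≤ b ^ (N - a + d) := pow_le_pow_of_le_one hb₀ hb₁ (by omega)
    _ = b ^ (N - a) * b ^ d := pow_add ..
    _ ≤ (M ^ (N - a)) (s a) (s 0) * (M ^ d) (s 0) (s d) :=
        mul_le_mul hup hdown (pow_nonneg hb₀ _) (pow_apply_nonneg hM ..)
    _ ≤ (M ^ (N - a + d)) (s a) (s d) := by
        rw [pow_add, mul_apply]
        exact Finset.single_le_sum (f := fun k => (M ^ (N - a)) (s a) k * (M ^ d) k (s d))
          (fun k _ => mul_nonneg (pow_apply_nonneg hM ..) (pow_apply_nonneg hM ..))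
          (Finset.mem_univ _)

lemma CondB.exists_eventually_isUnifIrreducible {m : ℕ} {p : ℝ → Fin m → Fin m → ℝ} (hB : CondB p)
    (hp : ∀ᶠ ε in 𝓝[>] (0 : ℝ), ∀ i j, 0 ≤ p ε i j) :
    ∃ c > 0, ∃ L, ∀ᶠ ε in 𝓝[>] (0 : ℝ), IsUnifIrreducible (of (p ε)) c L := by
  obtain ⟨N, -, s, hring, hcover, hliminf⟩ := hB
  obtain ⟨b, ⟨hb₀, hb₁⟩, hb⟩ : ∃ b ∈ Ioo (0 : ℝ) 1, ∀ k ∈ Finset.range N,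
      b < liminf (fun ε => p ε (s k) (s (k + 1))) (𝓝[>] (0 : ℝ)) :=
    (Filter.Eventually.and (Ioo_mem_nhdsGT one_pos) ((Filter.eventually_all_finset _).2 fun k hk =>
      (eventually_lt_nhds (hliminf k (Finset.mem_range.1 hk))).filter_mono
        nhdsWithin_le_nhds)).exists
  have hedges : ∀ᶠ ε in 𝓝[>] (0 : ℝ), ∀ k ∈ Finset.range N, b < p ε (s k) (s (k + 1)) :=
    (Filter.eventually_all_finset _).2 fun k hk => eventually_lt_of_lt_liminf (hb k hk)
      ⟨0, eventually_map.2 <| hp.mono fun ε hε => hε _ _⟩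
  refine ⟨b ^ (2 * N), pow_pos hb₀ _, 2 * N, ?_⟩
  filter_upwards [hp, hedges] with ε hpε hε
  exact isUnifIrreducible_of_ring hpε hb₀.le hb₁.le hring hcover
    fun k hk => (hε k (Finset.mem_range.2 hk)).le

end RingChain

section Asymptotics

variable {α : Type*} {l : Filter α}

lemma le_neg_log_one_sub {x : ℝ} (hx : x < 1) : x ≤ -Real.log (1 - x) := by
  linarith [Real.log_le_sub_one_of_pos (sub_pos.2 hx)]

lemma one_sub_mul_neg_log_one_sub_le {x : ℝ} (hx : x < 1) : (1 - x) * -Real.log (1 - x) ≤ x := by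
  have hpos : 0 < 1 - x := sub_pos.2 hx
  calc (1 - x) * -Real.log (1 - x) ≤ (1 - x) * -(1 - (1 - x)⁻¹) :=
        mul_le_mul_of_nonneg_left (neg_le_neg (Real.one_sub_inv_le_log_of_pos hpos)) hpos.le
    _ = x := by field_simp; ring

lemma tendsto_natCast_mul_of_tendsto_one_sub_pow {n : α → ℕ} {δ : α → ℝ} {x : ℝ} (hx : x ≠ 0)
    (hδ : Tendsto δ l (𝓝 0)) (hpow : Tendsto (fun a => (1 - δ a) ^ n a) l (𝓝 x)) :
    Tendsto (fun a => n a * δ a) l (𝓝 (-Real.log x)) := by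
  have hlog : Tendsto (fun a => n a * -Real.log (1 - δ a)) l (𝓝 (-Real.log x)) := by
    simpa only [Real.log_pow, mul_neg] using (hpow.log hx).neg
  have hlower : Tendsto (fun a => (1 - δ a) * (n a * -Real.log (1 - δ a))) l
      (𝓝 (-Real.log x)) := by
    simpa using (hδ.const_sub 1).mul hlog
  have hlt : ∀ᶠ a in l, δ a < 1 := hδ.eventually_lt_const one_pos
  refine tendsto_of_tendsto_of_tendsto_of_le_of_le' hlower hlog ?_ ?_
  · filter_upwards [hlt] with a ha
    rw [mul_left_comm]
    exact mul_le_mul_of_nonneg_left (one_sub_mul_neg_log_one_sub_le ha) (Nat.cast_nonneg _)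
  · filter_upwards [hlt] with a ha
    exact mul_le_mul_of_nonneg_left (le_neg_log_one_sub ha) (Nat.cast_nonneg _)

lemma tendsto_zero_of_le_exp_neg_mul {x y k : α → ℝ} {x₀ : ℝ} (hk : Tendsto k l atTop)
    (hx₀ : 0 < x₀) (hx : Tendsto x l (𝓝 x₀)) (hy : ∀ᶠ a in l, 0 ≤ y a)
    (hxy : ∀ᶠ a in l, x a ≤ Real.exp (-(y a * k a))) : Tendsto y l (𝓝 0) := by
  refine squeeze_zero' hy ?_ ((hx.log hx₀.ne').neg.div_atTop hk)
  filter_upwards [hxy, hx.eventually_const_lt hx₀, hk.eventually_gt_atTop 0] with a ha hxa hka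
  rw [le_div_iff₀ hka, le_neg]
  exact (Real.log_le_iff_le_exp hxa).2 ha

lemma tendsto_mul_of_tendsto_floor_mul {v δ : α → ℝ} {x : ℝ} (hv : Tendsto v l atTop)
    (h : Tendsto (fun a => ⌊v a⌋₊ * δ a) l (𝓝 x)) : Tendsto (fun a => v a * δ a) l (𝓝 x) := by
  have hratio : Tendsto (fun a => v a / ⌊v a⌋₊) l (𝓝 1) := by
    simpa [Function.comp_def] using
      (tendsto_nat_floor_div_atTop.comp hv).inv₀ (one_ne_zero (α := ℝ))
  have hfloor : ∀ᶠ a in l, 0 < ⌊v a⌋₊ := (tendsto_nat_floor_atTop.comp hv).eventually_gt_atTop 0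
  rw [← one_mul x]
  refine (hratio.mul h).congr' (hfloor.mono fun a ha => ?_)
  have : (⌊v a⌋₊ : ℝ) ≠ 0 := by exact_mod_cast ha.ne'
  field_simp

variable {S : Type*} [Fintype S] [DecidableEq S] {P Φ : α → Matrix S S ℝ} {π q : α → S → ℝ}
  {v : α → ℝ} {c x : ℝ} {L : ℕ}

lemma tendsto_killProb_zero (hΦ : ∀ᶠ a in l, IsKilledChain (Φ a) (P a)) (hc : 0 < c)
    (hirr : ∀ᶠ a in l, IsUnifIrreducible (P a) c L) (hπ : ∀ᶠ a in l, π a ∈ stdSimplex ℝ S)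
    (hq : ∀ᶠ a in l, q a ∈ stdSimplex ℝ S) {n : α → ℕ} (hn : Tendsto n l atTop) (hx₀ : 0 < x)
    (hx : Tendsto (fun a => q a ⬝ᵥ survival (Φ a) (n a)) l (𝓝 x)) :
    Tendsto (fun a => killProb (π a) (Φ a)) l (𝓝 0) := by
  have hblocks : Tendsto (fun a => ((n a / (L + 1) : ℕ) : ℝ)) l atTop :=
    tendsto_natCast_atTop_atTop.comp ((Nat.tendsto_div_const_atTop L.succ_ne_zero).comp hn)
  have hscaled : Tendsto (fun a => c * killProb (π a) (Φ a)) l (𝓝 0) := by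
    refine tendsto_zero_of_le_exp_neg_mul hblocks hx₀ hx ?_ ?_
    · filter_upwards [hΦ, hπ] with a hΦ hπ using mul_nonneg hc.le (hΦ.killProb_nonneg hπ)
    · filter_upwards [hΦ, hirr, hπ, hq] with a hΦ hirr hπ hq
      exact dotProduct_le_of_mem_stdSimplex hq (hΦ.survival_le_exp hirr hπ _)
  simpa [hc.ne'] using hscaled.const_mul c⁻¹

theorem tendsto_mul_killProb (hΦ : ∀ᶠ a in l, IsKilledChain (Φ a) (P a)) (hc : 0 < c)
    (hirr : ∀ᶠ a in l, IsUnifIrreducible (P a) c L) (hπ : ∀ᶠ a in l, π a ∈ stdSimplex ℝ S)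
    (hπP : ∀ᶠ a in l, π a ᵥ* P a = π a) (hq : ∀ᶠ a in l, q a ∈ stdSimplex ℝ S)
    (hv : Tendsto v l atTop) (hx₀ : 0 < x)
    (hx : Tendsto (fun a => q a ⬝ᵥ survival (Φ a) ⌊v a⌋₊) l (𝓝 x)) :
    Tendsto (fun a => v a * killProb (π a) (Φ a)) l (𝓝 (-Real.log x)) := by
  have hδ : Tendsto (fun a => killProb (π a) (Φ a)) l (𝓝 0) :=
    tendsto_killProb_zero hΦ hc hirr hπ hq (tendsto_nat_floor_atTop.comp hv) hx₀ hx
  have hdiff : Tendsto (fun a => q a ⬝ᵥ survival (Φ a) ⌊v a⌋₊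
      - (1 - killProb (π a) (Φ a)) ^ ⌊v a⌋₊) l (𝓝 0) := by
    refine squeeze_zero_norm' ?_
      (by simpa using hδ.const_mul (2 * (L * Fintype.card S / c ^ 2)))
    filter_upwards [hΦ, hirr, hπ, hπP, hq] with a hΦ hirr hπ hπP hq
    exact hΦ.abs_dotProduct_survival_sub_pow_le hirr hc hπ hπP hq _
  have hpow : Tendsto (fun a => (1 - killProb (π a) (Φ a)) ^ ⌊v a⌋₊) l (𝓝 x) := by
    simpa using hx.sub hdiff
  exact tendsto_mul_of_tendsto_floor_mul hv
    (tendsto_natCast_mul_of_tendsto_one_sub_pow hx₀.ne' hδ hpow)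

end Asymptotics

section Laplace

variable {Ω : Type*} [MeasurableSpace Ω] {s : ℝ}

lemma exp_neg_mul_le_one {x : ℝ} (hs : 0 ≤ s) (hx : 0 ≤ x) : Real.exp (-(s * x)) ≤ 1 :=
  Real.exp_le_one_iff.2 (neg_nonpos.2 (mul_nonneg hs hx))

lemma integrable_exp_neg_mul {ρ : Measure Ω} [IsFiniteMeasure ρ] {f : Ω → ℝ} (hf : Measurable f)
    (hf₀ : ∀ᵐ ω ∂ρ, 0 ≤ f ω) (hs : 0 ≤ s) : Integrable (fun ω => Real.exp (-(s * f ω))) ρ := by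
  refine Integrable.of_bound (by fun_prop) 1 (hf₀.mono fun ω hω => ?_)
  rw [Real.norm_eq_abs, Real.abs_exp]
  exact exp_neg_mul_le_one hs hω

/-- The Laplace transform of a measure carried by the nonnegative half-line. -/
def laplace (ν : Measure ℝ) (s : ℝ) : ℝ := ∫ x, Real.exp (-(s * x)) ∂ν

variable {ν : Measure ℝ}

lemma laplace_nonneg (ν : Measure ℝ) (s : ℝ) : 0 ≤ laplace ν s :=
  integral_nonneg fun _ => Real.exp_nonneg _

lemma laplace_le_real_univ [IsFiniteMeasure ν] (hν : ∀ᵐ x ∂ν, 0 ≤ x) (hs : 0 ≤ s) :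
    laplace ν s ≤ ν.real univ :=
  calc laplace ν s ≤ ∫ _, (1 : ℝ) ∂ν :=
        integral_mono_ae (integrable_exp_neg_mul measurable_id hν hs) (integrable_const _)
          (hν.mono fun _ hx => exp_neg_mul_le_one hs hx)
    _ = ν.real univ := by simp

lemma laplace_pos [IsFiniteMeasure ν] [NeZero ν] (hν : ∀ᵐ x ∂ν, 0 ≤ x) (hs : 0 ≤ s) :
    0 < laplace ν s :=
  integral_exp_pos (integrable_exp_neg_mul measurable_id hν hs)

lemma laplace_lt_one [IsProbabilityMeasure ν] (hν : ∀ᵐ x ∂ν, 0 ≤ x) (hν₀ : ν {0} < 1)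
    (hs : 0 < s) : laplace ν s < 1 := by
  have hint : Integrable (fun x => Real.exp (-(s * x))) ν :=
    integrable_exp_neg_mul measurable_id hν hs.le
  have hle : (fun x => Real.exp (-(s * x))) ≤ᵐ[ν] fun _ => 1 :=
    hν.mono fun _ hx => exp_neg_mul_le_one hs.le hx
  refine (by simpa using laplace_le_real_univ hν hs.le : laplace ν s ≤ 1).lt_of_ne fun heq => ?_
  have hae : (fun x => Real.exp (-(s * x))) =ᵐ[ν] fun _ => 1 :=
    (integral_eq_iff_of_ae_le hint (integrable_const _) hle).1 (by simpa [laplace] using heq)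
  have hzero : ∀ᵐ x ∂ν, x ∈ ({0} : Set ℝ) := hae.mono fun x hx => by
    simpa [hs.ne'] using hx
  exact hν₀.ne ((prob_compl_eq_zero_iff (measurableSet_singleton 0)).1 hzero)

lemma tendsto_laplace_nhdsGT_zero [IsProbabilityMeasure ν] (hν : ∀ᵐ x ∂ν, 0 ≤ x) :
    Tendsto (laplace ν) (𝓝[>] 0) (𝓝 1) := by
  have hlim : Tendsto (laplace ν) (𝓝[>] 0) (𝓝 (∫ _, (1 : ℝ) ∂ν)) := by
    refine tendsto_integral_filter_of_dominated_convergence (fun _ => 1)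
      (Eventually.of_forall fun s => by fun_prop) ?_ (integrable_const _)
      (Eventually.of_forall fun x => ?_)
    · filter_upwards [self_mem_nhdsWithin] with s hs
      filter_upwards [hν] with x hx
      rw [Real.norm_eq_abs, Real.abs_exp]
      exact exp_neg_mul_le_one (le_of_lt hs) hx
    · have hcont : Continuous fun s : ℝ => Real.exp (-(s * x)) := by fun_prop
      simpa using (hcont.tendsto 0).mono_left nhdsWithin_le_nhds
  simpa using hlim

end Laplace

@[to_additive]
lemma prod_Icc_eq_prod_range {M : Type*} [CommMonoid M] (f : ℕ → M) (n : ℕ) :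
    ∏ k ∈ Finset.Icc 1 n, f k = ∏ k ∈ Finset.range n, f (k + 1) := by
  rw [← Finset.Ico_add_one_right_eq_Icc, Finset.prod_Ico_eq_prod_range]
  simp [add_comm]

/- Once a partial product is nonpositive, so are all later ones. -/
lemma ofReal_prod_range_of_antitone {a : ℕ → ℝ}
    (h : Antitone fun n => ENNReal.ofReal (∏ k ∈ Finset.range n, a k)) (n : ℕ) :
    ENNReal.ofReal (∏ k ∈ Finset.range n, a k) = ∏ k ∈ Finset.range n, ENNReal.ofReal (a k) := by
  induction n with
  | zero => simp
  | succ n ih =>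
    rw [Finset.prod_range_succ fun k => ENNReal.ofReal (a k), ← ih]
    rcases le_total 0 (∏ k ∈ Finset.range n, a k) with hpos | hneg
    · rw [Finset.prod_range_succ, ENNReal.ofReal_mul hpos]
    · have hle := h n.le_succ
      simp only [ENNReal.ofReal_of_nonpos hneg, nonpos_iff_eq_zero] at hle
      rw [hle, ENNReal.ofReal_of_nonpos hneg, zero_mul]

lemma pi_eq_of_forall_Iic {ι : Type*} [Fintype ι] {ν : ι → Measure ℝ} [∀ i, IsFiniteMeasure (ν i)]
    {ρ : Measure (ι → ℝ)} (h : ∀ T, ρ (Iic T) = ∏ i, ν i (Iic (T i))) : Measure.pi ν = ρ := by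
  refine Measure.pi_eq_generateFrom (C := fun _ => range Iic)
    (fun _ => (borel_eq_generateFrom_Iic ℝ).symm.trans BorelSpace.measurable_eq.symm)
    (fun _ => isPiSystem_Iic)
    (fun i => ⟨fun j => Iic (j : ℝ), fun j => mem_range_self _, fun j => measure_lt_top _ _, ?_⟩)
    fun B hB => ?_
  · exact iUnion_eq_univ_iff.2 fun x => exists_nat_ge x
  · choose T hT using hB
    obtain rfl : (fun i => Iic (T i)) = B := funext hT
    rw [pi_univ_Iic, h]

section MarkovRenewal

variable {S Ω : Type*}

/-- The event that the first `n + 1` states are `I 0, …, I n`. -/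
def statePath (η : ℕ → Ω → S) (n : ℕ) (I : ℕ → S) : Set Ω := {ω | ∀ k ≤ n, η k ω = I k}

lemma iUnion_statePath_update (η : ℕ → Ω → S) (n : ℕ) (I : ℕ → S) :
    ⋃ j, statePath η (n + 1) (Function.update I (n + 1) j) = statePath η n I := by
  ext ω
  simp only [statePath, mem_iUnion, mem_ofPred_eq, Nat.le_succ_iff_eq_or_le, forall_eq_or_imp,
    Function.update_self]
  have hupd (j : S) : ∀ k ≤ n, Function.update I (n + 1) j k = I k :=
    fun k hk => Function.update_of_ne (by omega) ..
  constructor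
  · rintro ⟨j, -, hj⟩ k hk
    rw [hj k hk, hupd j k hk]
  · exact fun hω => ⟨η (n + 1) ω, rfl, fun k hk => by rw [hω k hk, hupd _ k hk]⟩

lemma pairwise_disjoint_statePath_update (η : ℕ → Ω → S) (n : ℕ) (I : ℕ → S) :
    Pairwise (Function.onFun Disjoint
      fun j => statePath η (n + 1) (Function.update I (n + 1) j)) := by
  intro j j' hjj'
  refine Set.disjoint_left.2 fun ω hω hω' => hjj' ?_
  simpa using (hω (n + 1) le_rfl).symm.trans (hω' (n + 1) le_rfl)

lemma preimage_Iic_inter_statePath (η : ℕ → Ω → S) (κ : ℕ → Ω → ℝ) (n : ℕ) (I : ℕ → S)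
    (T : ℕ → ℝ) :
    (fun ω (k : Fin n) => κ (k + 1) ω) ⁻¹' Iic (fun k => T (k + 1)) ∩ statePath η n I
      = {ω | ∀ k ≤ n, η k ω = I k ∧ (1 ≤ k → κ k ω ≤ T k)} := by
  ext ω
  constructor
  · rintro ⟨hκ, hη⟩ k hk
    refine ⟨hη k hk, fun hk₁ => ?_⟩
    obtain ⟨k, rfl⟩ := Nat.exists_eq_add_of_le' hk₁
    exact hκ ⟨k, hk⟩
  · exact fun hω => ⟨fun k => (hω (k + 1) k.2).2 (by omega), fun k hk => (hω k hk).1⟩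

variable [MeasurableSpace Ω]

/-- `η` and `κ` are the states and the rewards of a Markov renewal process with semi-Markov
transition probabilities `Q`, where `Ps i` is the law started from `i`. The reward `κ 0` plays no
role, so only `κ 1, κ 2, …` enter the joint law. -/
structure IsMarkovRenewal [MeasurableSpace S] (η : ℕ → Ω → S) (κ : ℕ → Ω → ℝ)
    (Ps : S → Measure Ω) (Q : S → S → ℝ → ℝ) : Prop where
  isProbabilityMeasure : ∀ i, IsProbabilityMeasure (Ps i)
  measurable_state : ∀ n, Measurable (η n)
  measurable_reward : ∀ n, Measurable (κ n)
  reward_nonneg : ∀ n ω, 0 ≤ κ n ω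
  measure_trajectory : ∀ (n : ℕ) (I : ℕ → S) (T : ℕ → ℝ),
    Ps (I 0) {ω | ∀ k ≤ n, η k ω = I k ∧ (1 ≤ k → κ k ω ≤ T k)}
      = ENNReal.ofReal (∏ k ∈ Finset.Icc 1 n, Q (I (k - 1)) (I k) (T k))

/-- The transition matrix of the embedded Markov chain. -/
def transitionMatrix (η : ℕ → Ω → S) (Ps : S → Measure Ω) : Matrix S S ℝ :=
  of fun i j => (Ps i).real {ω | η 1 ω = j}

/-- The semi-Markov kernel: the law of the reward of a transition `i → j`, a measure of total mass
the transition probability. -/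
def stepLaw (η : ℕ → Ω → S) (κ : ℕ → Ω → ℝ) (Ps : S → Measure Ω) (i j : S) : Measure ℝ :=
  ((Ps i).restrict {ω | η 1 ω = j}).map (κ 1)

/-- The matrix `E_i[e^{-s κ₁}; η₁ = j]` of Laplace transforms of the semi-Markov kernel. -/
def laplaceMatrix (η : ℕ → Ω → S) (κ : ℕ → Ω → ℝ) (Ps : S → Measure Ω) (s : ℝ) :
    Matrix S S ℝ :=
  of fun i j => laplace (stepLaw η κ Ps i j) s

variable [MeasurableSpace S] {η : ℕ → Ω → S} {κ : ℕ → Ω → ℝ} {Ps : S → Measure Ω}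
  {Q : S → S → ℝ → ℝ} {s : ℝ}

namespace IsMarkovRenewal

variable (h : IsMarkovRenewal η κ Ps Q)
include h

lemma stepLaw_apply {B : Set ℝ} (hB : MeasurableSet B) (i j : S) :
    stepLaw η κ Ps i j B = Ps i (κ 1 ⁻¹' B ∩ {ω | η 1 ω = j}) := by
  rw [stepLaw, Measure.map_apply (h.measurable_reward 1) hB,
    Measure.restrict_apply (h.measurable_reward 1 hB)]

lemma isFiniteMeasure_stepLaw (i j : S) : IsFiniteMeasure (stepLaw η κ Ps i j) := by
  have := h.isProbabilityMeasure i
  rw [stepLaw]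
  infer_instance

lemma ae_stepLaw_nonneg (i j : S) : ∀ᵐ x ∂stepLaw η κ Ps i j, 0 ≤ x :=
  (ae_map_iff (h.measurable_reward 1).aemeasurable measurableSet_Ici).2 <|
    Eventually.of_forall fun ω => h.reward_nonneg 1 ω

lemma integrable_exp_neg_mul_sum (hs : 0 ≤ s) (n : ℕ) (i : S) :
    Integrable (fun ω => Real.exp (-(s * ∑ k ∈ Finset.Icc 1 n, κ k ω))) (Ps i) := by
  have := h.isProbabilityMeasure i
  exact integrable_exp_neg_mul (Finset.measurable_fun_sum _ fun k _ => h.measurable_reward k)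
    (Eventually.of_forall fun ω => Finset.sum_nonneg fun k _ => h.reward_nonneg k ω) hs

variable [MeasurableSingletonClass S]

lemma measurableSet_state_eq (n : ℕ) (i : S) : MeasurableSet {ω | η n ω = i} :=
  h.measurable_state n (measurableSet_singleton i)

lemma measurableSet_statePath (n : ℕ) (I : ℕ → S) : MeasurableSet (statePath η n I) := by
  simp only [statePath, ofPred_forall]
  exact MeasurableSet.iInter fun k => MeasurableSet.iInter fun _ => h.measurableSet_state_eq k _

lemma ae_state_zero_eq (i : S) : ∀ᵐ ω ∂Ps i, η 0 ω = i := by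
  have := h.isProbabilityMeasure i
  refine (mem_ae_iff_prob_eq_one (h.measurableSet_state_eq 0 i)).2 ?_
  simpa using h.measure_trajectory 0 (fun _ => i) fun _ => 0

lemma stepLaw_Iic (i j : S) (t : ℝ) :
    stepLaw η κ Ps i j (Iic t) = ENNReal.ofReal (Q i j t) := by
  have hlaw : Ps i {ω | ∀ k ≤ 1, η k ω = (if k = 0 then i else j) ∧ (1 ≤ k → κ k ω ≤ t)}
      = ENNReal.ofReal (Q i j t) := by
    simpa using h.measure_trajectory 1 (fun k => if k = 0 then i else j) fun _ => t
  rw [h.stepLaw_apply measurableSet_Iic, ← hlaw]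
  refine measure_congr <| Eventually.set_eq <| (h.ae_state_zero_eq i).mono fun ω hω => ?_
  simp [Nat.le_one_iff_eq_zero_or_eq_one, hω, and_comm]

lemma measure_trajectory_eq_prod (n : ℕ) (I : ℕ → S) (T : ℕ → ℝ) :
    Ps (I 0) {ω | ∀ k ≤ n, η k ω = I k ∧ (1 ≤ k → κ k ω ≤ T k)}
      = ∏ k ∈ Finset.range n, stepLaw η κ Ps (I k) (I (k + 1)) (Iic (T (k + 1))) := by
  have hlaw (n : ℕ) : Ps (I 0) {ω | ∀ k ≤ n, η k ω = I k ∧ (1 ≤ k → κ k ω ≤ T k)}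
      = ENNReal.ofReal (∏ k ∈ Finset.range n, Q (I k) (I (k + 1)) (T (k + 1))) := by
    simpa only [prod_Icc_eq_prod_range, Nat.add_sub_cancel] using h.measure_trajectory n I T
  simp only [hlaw, h.stepLaw_Iic]
  refine ofReal_prod_range_of_antitone (fun n n' hn => ?_) n
  simp only [← hlaw]
  exact measure_mono fun ω hω k hk => hω k (hk.trans hn)

lemma map_restrict_statePath (n : ℕ) (I : ℕ → S) :
    ((Ps (I 0)).restrict (statePath η n I)).map (fun ω (k : Fin n) => κ (k + 1) ω)
      = Measure.pi fun k : Fin n => stepLaw η κ Ps (I k) (I (k + 1)) := by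
  have := fun i j => h.isFiniteMeasure_stepLaw i j
  have hmeas : Measurable fun ω (k : Fin n) => κ (k + 1) ω :=
    measurable_pi_lambda _ fun k => h.measurable_reward _
  refine (pi_eq_of_forall_Iic fun T => ?_).symm
  obtain ⟨T', rfl⟩ : ∃ T' : ℕ → ℝ, (fun k : Fin n => T' (k + 1)) = T :=
    ⟨fun k => if hk : k - 1 < n then T ⟨k - 1, hk⟩ else 0, by ext k; simp⟩
  rw [Measure.map_apply hmeas measurableSet_Iic, Measure.restrict_apply (hmeas measurableSet_Iic),
    preimage_Iic_inter_statePath, h.measure_trajectory_eq_prod, Finset.prod_range]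

lemma setIntegral_statePath_eq_prod (n : ℕ) (I : ℕ → S) (s : ℝ) :
    ∫ ω in statePath η n I, Real.exp (-(s * ∑ k ∈ Finset.Icc 1 n, κ k ω)) ∂Ps (I 0)
      = ∏ k ∈ Finset.range n, laplaceMatrix η κ Ps s (I k) (I (k + 1)) := by
  have := fun i j => h.isFiniteMeasure_stepLaw i j
  have hmeas : Measurable fun ω (k : Fin n) => κ (k + 1) ω :=
    measurable_pi_lambda _ fun k => h.measurable_reward _
  calc ∫ ω in statePath η n I, Real.exp (-(s * ∑ k ∈ Finset.Icc 1 n, κ k ω)) ∂Ps (I 0)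
      = ∫ ω in statePath η n I, ∏ k : Fin n, Real.exp (-(s * κ (k + 1) ω)) ∂Ps (I 0) := by
        simp only [sum_Icc_eq_sum_range, Finset.sum_range, ← Real.exp_sum,
          Finset.sum_neg_distrib, Finset.mul_sum]
    _ = ∫ x, ∏ k, Real.exp (-(s * x k))
          ∂Measure.pi fun k : Fin n => stepLaw η κ Ps (I k) (I (k + 1)) := by
        rw [← h.map_restrict_statePath, integral_map hmeas.aemeasurable
          (Measurable.aestronglyMeasurable (by fun_prop))]
    _ = ∏ k ∈ Finset.range n, laplaceMatrix η κ Ps s (I k) (I (k + 1)) := by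
        rw [integral_fintype_prod_eq_prod (𝕜 := ℝ) fun _ x => Real.exp (-(s * x)),
          Finset.prod_range]
        rfl

variable [Fintype S]

lemma sum_transitionMatrix (i : S) : ∑ j, transitionMatrix η Ps i j = 1 := by
  have := h.isProbabilityMeasure i
  simpa [transitionMatrix, preimage, measureReal_def] using
    sum_measureReal_preimage_singleton (μ := Ps i) Finset.univ (f := η 1)
    fun j _ => h.measurableSet_state_eq 1 j

variable [DecidableEq S]

lemma isKilledChain (hs : 0 ≤ s) :
    IsKilledChain (laplaceMatrix η κ Ps s) (transitionMatrix η Ps) where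
  stochastic := mem_rowStochastic_iff_sum.2 ⟨fun i j => measureReal_nonneg, h.sum_transitionMatrix⟩
  nonneg i j := laplace_nonneg _ _
  le i j := by
    have := h.isFiniteMeasure_stepLaw i j
    refine (laplace_le_real_univ (h.ae_stepLaw_nonneg i j) hs).trans_eq ?_
    rw [measureReal_def, h.stepLaw_apply MeasurableSet.univ, preimage_univ, univ_inter]
    rfl

lemma setIntegral_statePath_eq_mul_survival (hs : 0 ≤ s) (d n : ℕ) (I : ℕ → S) :
    ∫ ω in statePath η n I, Real.exp (-(s * ∑ k ∈ Finset.Icc 1 (n + d), κ k ω)) ∂Ps (I 0)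
      = (∏ k ∈ Finset.range n, laplaceMatrix η κ Ps s (I k) (I (k + 1)))
        * survival (laplaceMatrix η κ Ps s) d (I n) := by
  induction d generalizing n I with
  | zero => simpa using h.setIntegral_statePath_eq_prod n I s
  | succ d ih =>
    have hupd (j : S) : ∀ k ≤ n, Function.update I (n + 1) j k = I k :=
      fun k hk => Function.update_of_ne (by omega) ..
    rw [← iUnion_statePath_update, integral_iUnion_fintype
      (fun j => h.measurableSet_statePath _ _) (pairwise_disjoint_statePath_update η n I)
      fun j => (h.integrable_exp_neg_mul_sum hs _ _).integrableOn, survival_succ, mulVec,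
      dotProduct, Finset.mul_sum]
    refine Finset.sum_congr rfl fun j _ => ?_
    have hj := ih (n + 1) (Function.update I (n + 1) j)
    rw [hupd j 0 n.zero_le, Function.update_self, Finset.prod_range_succ, hupd j n le_rfl,
      Function.update_self] at hj
    rw [← add_assoc, add_right_comm, hj, mul_assoc]
    congr 1
    refine Finset.prod_congr rfl fun k hk => ?_
    have hk := Finset.mem_range.1 hk
    rw [hupd j k hk.le, hupd j (k + 1) hk]

lemma integral_exp_eq_survival (hs : 0 ≤ s) (n : ℕ) (i : S) :
    ∫ ω, Real.exp (-(s * ∑ k ∈ Finset.Icc 1 n, κ k ω)) ∂Ps i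
      = survival (laplaceMatrix η κ Ps s) n i := by
  have hpath := h.setIntegral_statePath_eq_mul_survival hs n 0 fun _ => i
  rw [Finset.range_zero, Finset.prod_empty, one_mul, zero_add] at hpath
  rw [← hpath, setIntegral_eq_integral_of_ae_compl_eq_zero]
  filter_upwards [h.ae_state_zero_eq i] with ω hω hωI
  exact absurd (fun k hk => by rwa [Nat.le_zero.1 hk]) hωI

lemma killProb_laplaceMatrix (hs : 0 ≤ s) (π : S → ℝ) :
    killProb π (laplaceMatrix η κ Ps s)
      = 1 - ∑ i, π i * ∫ ω, Real.exp (-(s * κ 1 ω)) ∂Ps i := by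
  simp only [killProb, dotProduct, ← h.integral_exp_eq_survival hs, Finset.Icc_self,
    Finset.sum_singleton]

lemma integral_exp_mixture_eq_survival (hs : 0 ≤ s) {q : S → ℝ} (hq : 0 ≤ q) (n : ℕ) :
    ∫ ω, Real.exp (-(s * ∑ k ∈ Finset.Icc 1 n, κ k ω)) ∂(∑ i, ENNReal.ofReal (q i) • Ps i)
      = q ⬝ᵥ survival (laplaceMatrix η κ Ps s) n := by
  rw [integral_finsetSum_measure fun i _ =>
    (h.integrable_exp_neg_mul_sum hs n i).smul_measure ENNReal.ofReal_ne_top]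
  refine Finset.sum_congr rfl fun i _ => ?_
  rw [integral_smul_measure, h.integral_exp_eq_survival hs, ENNReal.toReal_ofReal (hq i),
    smul_eq_mul]

end IsMarkovRenewal

theorem tendsto_mul_one_sub_integral_exp {α : Type*} {l : Filter α} [Fintype S] [DecidableEq S]
    [MeasurableSingletonClass S] {η : α → ℕ → Ω → S} {κ : α → ℕ → Ω → ℝ}
    {Ps : α → S → Measure Ω} {Q : α → S → S → ℝ → ℝ} {π q : α → S → ℝ} {v : α → ℝ} {c x : ℝ}
    {L : ℕ} (hMR : ∀ᶠ a in l, IsMarkovRenewal (η a) (κ a) (Ps a) (Q a)) (hc : 0 < c)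
    (hirr : ∀ᶠ a in l, IsUnifIrreducible (transitionMatrix (η a) (Ps a)) c L)
    (hπ : ∀ᶠ a in l, π a ∈ stdSimplex ℝ S)
    (hπP : ∀ᶠ a in l, π a ᵥ* transitionMatrix (η a) (Ps a) = π a)
    (hq : ∀ᶠ a in l, q a ∈ stdSimplex ℝ S) (hv : Tendsto v l atTop) (hs : 0 ≤ s) (hx₀ : 0 < x)
    (hx : Tendsto (fun a => ∫ ω, Real.exp (-(s * ∑ n ∈ Finset.Icc 1 ⌊v a⌋₊, κ a n ω))
      ∂(∑ i, ENNReal.ofReal (q a i) • Ps a i)) l (𝓝 x)) :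
    Tendsto (fun a => v a * (1 - ∑ i, π a i * ∫ ω, Real.exp (-(s * κ a 1 ω)) ∂Ps a i)) l
      (𝓝 (-Real.log x)) := by
  have hsurvival : Tendsto
      (fun a => q a ⬝ᵥ survival (laplaceMatrix (η a) (κ a) (Ps a) s) ⌊v a⌋₊) l (𝓝 x) :=
    hx.congr' <| by
      filter_upwards [hMR, hq] with a ha hqa using ha.integral_exp_mixture_eq_survival hs hqa.1 _
  have hkill := tendsto_mul_killProb (hMR.mono fun a ha => ha.isKilledChain hs) hc hirr hπ hπP hq
    hv hx₀ hsurvival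
  exact hkill.congr' (hMR.mono fun a ha => by rw [ha.killProb_laplaceMatrix hs])

end MarkovRenewal

/-- Theorem 2, necessity part: under condition B, if the step-sum reward
variables `κ_ε(1)` converge in distribution (for some family of initial distributions) to a
nonnegative random variable `θ₀` whose law `μ` is not concentrated at zero, then condition
D₁ holds, and the Laplace transform of `θ₀` is `e^{−A(s)}`. -/
theorem stmt4 {m : ℕ} (hm : 0 < m) (ε₀ : ℝ) (hε₀ : 0 < ε₀)
    {Ω : Type} [MeasurableSpace Ω]
    (η : ℝ → ℕ → Ω → Fin m) (κ : ℝ → ℕ → Ω → ℝ)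
    (Pstart : ℝ → Fin m → Measure Ω)
    (hprob : ∀ ε i, IsProbabilityMeasure (Pstart ε i))
    (hmeas : ∀ ε n, Measurable (η ε n) ∧ Measurable (κ ε n))
    (hκnn : ∀ ε n ω, 0 ≤ κ ε n ω)
    (Q : ℝ → Fin m → Fin m → ℝ → ℝ)
    (hMRP : ∀ ε ∈ Ioc (0:ℝ) ε₀, ∀ n : ℕ, ∀ I : ℕ → Fin m, ∀ T : ℕ → ℝ,
      Pstart ε (I 0) {ω | ∀ k ≤ n, (η ε k ω = I k ∧ (1 ≤ k → κ ε k ω ≤ T k))}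
        = ENNReal.ofReal (∏ k ∈ Finset.Icc 1 n, Q ε (I (k - 1)) (I k) (T k)))
    (p : ℝ → Fin m → Fin m → ℝ)
    (hp : ∀ ε ∈ Ioc (0:ℝ) ε₀, ∀ i j, p ε i j = (Pstart ε i {ω | η ε 1 ω = j}).toReal)
    (hB : CondB p)
    (π : ℝ → Fin m → ℝ)
    (hπ : ∀ᶠ ε in 𝓝[>] (0:ℝ), IsStationaryDist (fun i j => p ε i j) (π ε))
    -- some family of initial distributions q̄_ε and corresponding laws P_ε
    (q : ℝ → Fin m → ℝ) (Pq : ℝ → Measure Ω)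
    (hq : ∀ ε ∈ Ioc (0:ℝ) ε₀, (∀ i, 0 ≤ q ε i) ∧ ∑ i, q ε i = 1)
    (hmix : ∀ ε ∈ Ioc (0:ℝ) ε₀, Pq ε = ∑ i, ENNReal.ofReal (q ε i) • Pstart ε i)
    (v : ℝ → ℝ) (hvpos : ∀ ε ∈ Ioc (0:ℝ) ε₀, 0 < v ε)
    (hvinf : Tendsto v (𝓝[>] (0:ℝ)) atTop)
    -- κ_ε(1) converges in distribution to the law μ of θ₀, nonnegative and
    -- not concentrated at zero
    (μ : Measure ℝ) (hμprob : IsProbabilityMeasure μ) (hμnn : μ (Iio 0) = 0)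
    (hμ0 : μ {0} < 1)
    (hconv : ∀ s > 0, Tendsto
      (fun ε => ∫ ω, Real.exp (-(s * ∑ n ∈ Finset.Icc 1 (Nat.floor (v ε)), κ ε n ω)) ∂(Pq ε))
      (𝓝[>] (0:ℝ)) (𝓝 (∫ x, Real.exp (-(s * x)) ∂μ))) :
    ∃ A : ℝ → ℝ,
      (∀ s > 0, Tendsto
        (fun ε => v ε * (1 - ∑ i, π ε i * ∫ ω, Real.exp (-(s * κ ε 1 ω)) ∂(Pstart ε i)))
        (𝓝[>] (0:ℝ)) (𝓝 (A s))) ∧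
      (∀ s > 0, 0 < A s) ∧
      Tendsto A (𝓝[>] (0:ℝ)) (𝓝 0) ∧
      ∀ s > 0, ∫ x, Real.exp (-(s * x)) ∂μ = Real.exp (-(A s)) := by
  have hμ : ∀ᵐ x ∂μ, 0 ≤ x := by simpa [ae_iff, Iio] using hμnn
  have hIoc : ∀ᶠ ε in 𝓝[>] (0 : ℝ), ε ∈ Ioc 0 ε₀ := Ioc_mem_nhdsGT hε₀
  have hMR : ∀ᶠ ε in 𝓝[>] (0 : ℝ), IsMarkovRenewal (η ε) (κ ε) (Pstart ε) (Q ε) :=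
    hIoc.mono fun ε hε =>
      ⟨hprob ε, fun n => (hmeas ε n).1, fun n => (hmeas ε n).2, hκnn ε, hMRP ε hε⟩
  have htrans : ∀ᶠ ε in 𝓝[>] (0 : ℝ), of (p ε) = transitionMatrix (η ε) (Pstart ε) :=
    hIoc.mono fun ε hε => Matrix.ext (hp ε hε)
  obtain ⟨c, hc, L, hirr⟩ := hB.exists_eventually_isUnifIrreducible
    (hIoc.mono fun ε hε i j => (hp ε hε i j).symm ▸ ENNReal.toReal_nonneg)
  have hirr' : ∀ᶠ ε in 𝓝[>] (0 : ℝ),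
      IsUnifIrreducible (transitionMatrix (η ε) (Pstart ε)) c L := by
    filter_upwards [hirr, htrans] with ε hirr hP using hP ▸ hirr
  have hπP : ∀ᶠ ε in 𝓝[>] (0 : ℝ), π ε ᵥ* transitionMatrix (η ε) (Pstart ε) = π ε := by
    filter_upwards [hπ, htrans] with ε hπ hP using hP ▸ funext fun j => (hπ.2.2 j).symm
  refine ⟨fun s => -Real.log (laplace μ s), fun s hs => ?_, fun s hs => ?_, ?_, fun s hs => ?_⟩
  · exact tendsto_mul_one_sub_integral_exp hMR hc hirr' (hπ.mono fun ε h => ⟨h.1, h.2.1⟩) hπP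
      (hIoc.mono hq) hvinf hs.le (laplace_pos hμ hs.le)
      ((hconv s hs).congr' (hIoc.mono fun ε hε => by rw [hmix ε hε]))
  · exact neg_pos.2 (Real.log_neg (laplace_pos hμ hs.le) (laplace_lt_one hμ hμ0 hs))
  · simpa using ((tendsto_laplace_nhdsGT_zero hμ).log one_ne_zero).neg
  · rw [neg_neg, Real.exp_log (laplace_pos hμ hs.le), laplace]
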